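/- Let A, B be complementary direct factors of ℕ+ (every n has a unique factorization n = a·b with a ∈ A, b ∈ B), with λ = (Σ_{a ∈ A} 1/a)^{-1} ∈ (0,1]. Let f : ℕ+ → ℝ satisfy Σ_{a ∈ A} min(f(a),0)/a > -∞, and define f(n;A) = f(a) where n = a·b, a ∈ A, b ∈ B. Then t^{-1} Σ_{n ≤ t} f(n;A) → λ · Σ_{a ∈ A} f(a)/a as t → ∞ (the limit may be +∞). -/

import Mathlib

/-!
Summing `f(·; A)` over `n = a * b ≤ t` writes its mean as `∑ a ∈ A, (f a / a) * R (t / a)`, where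
`R x` is the proportion of `B` up to `x`. Once `R` is known to converge, dominated convergence gives
the mean value for summable `f a / a`, and positivity of the limit gives divergence otherwise.

The case `f = 1` reads `∑ a ∈ A, R (x / a) / a = ⌊x⌋ / x`: a combination of commuting dilations
takes the bounded function `R` to a function with limit `1`. By Gelfand theory that combination is
invertible, in the closed algebra generated by the dilations, as soon as `∑ a ∈ A, χ a ≠ 0` for
every completely multiplicative `χ` with `|χ n| ≤ 1 / n`. For `χ` restricted to smooth numbers this
holds since the product with the corresponding sum over `B` is a finite Euler product. To pass to
the limit, scale the values of `χ` at the primes below `N` by a complex parameter `z`,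
`|z| < 3 / 2`. The sum is then a uniform limit of nonvanishing holomorphic functions of `z`, so by
Hurwitz's theorem a zero at `z = 1` forces a zero at `z = 0`, whereas the value at `z = 0` tends to
`1` as `N → ∞`. Absolute convergence of the scaled sum follows from comparing the shares that `A`
has in the two Euler products.
-/

open Filter Topology

/-- Complementary direct factors of the positive integers: every positive `n` is `a * b` for exactly
one pair `(a, b) ∈ A × B`. -/
structure IsDirectFactorPair (A B : Set ℕ) : Prop where
  pos_left : ∀ a ∈ A, 0 < a
  pos_right : ∀ b ∈ B, 0 < b
  existsUnique : ∀ n : ℕ, 0 < n → ∃! p : ℕ × ℕ, p.1 ∈ A ∧ p.2 ∈ B ∧ p.1 * p.2 = n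

theorem indicator_smoothNumbers_mul {R : Type*} [MulZeroOneClass R] (f : ℕ →* R) (M m n : ℕ) :
    M.smoothNumbers.indicator f (m * n) =
      M.smoothNumbers.indicator f m * M.smoothNumbers.indicator f n := by
  have hmem : m * n ∈ M.smoothNumbers ↔ m ∈ M.smoothNumbers ∧ n ∈ M.smoothNumbers :=
    ⟨fun h => ⟨Nat.mem_smoothNumbers_of_dvd h (dvd_mul_right m n),
      Nat.mem_smoothNumbers_of_dvd h (dvd_mul_left n m)⟩,
      fun h => Nat.mul_mem_smoothNumbers h.1 h.2⟩
  by_cases hm : m ∈ M.smoothNumbers <;> by_cases hn : n ∈ M.smoothNumbers <;>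
    simp [Set.indicator, hmem, hm, hn]

theorem summable_norm_indicator_smoothNumbers {F : Type*} [NormedField F] [CompleteSpace F]
    {f : ℕ →* F} (hf : ∀ {p : ℕ}, p.Prime → ‖f p‖ < 1) (M : ℕ) :
    Summable fun n => ‖M.smoothNumbers.indicator f n‖ := by
  simp only [norm_indicator_eq_indicator_norm]
  exact summable_subtype_iff_indicator.1
    (EulerProduct.summable_and_hasSum_smoothNumbers_prod_primesBelow_geometric hf M).1

namespace IsDirectFactorPair

variable {A B : Set ℕ} (h : IsDirectFactorPair A B)
include h

theorem eq_and_eq_of_mul_eq_mul {a a' b b' : ℕ} (ha : a ∈ A) (ha' : a' ∈ A) (hb : b ∈ B)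
    (hb' : b' ∈ B) (hmul : a * b = a' * b') : a = a' ∧ b = b' :=
  Prod.ext_iff.1 <| (h.existsUnique (a' * b')
    (Nat.mul_pos (h.pos_left _ ha') (h.pos_right _ hb'))).unique
      (y₁ := (a, b)) (y₂ := (a', b')) ⟨ha, hb, hmul⟩ ⟨ha', hb', rfl⟩

theorem exists_mul_eq {n : ℕ} (hn : 0 < n) : ∃ a ∈ A, ∃ b ∈ B, a * b = n :=
  let ⟨p, ⟨ha, hb, hmul⟩, _⟩ := h.existsUnique n hn
  ⟨p.1, ha, p.2, hb, hmul⟩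

theorem one_mem_left : 1 ∈ A := by
  obtain ⟨a, ha, b, -, hmul⟩ := h.exists_mul_eq one_pos
  exact Nat.eq_one_of_mul_eq_one_right hmul ▸ ha

/-- Multiplication as a bijection from `A × B` to the positive integers. -/
noncomputable def mulEquiv : A × B ≃ {n : ℕ | 0 < n} :=
  .ofBijective (fun p => ⟨p.1 * p.2, Nat.mul_pos (h.pos_left _ p.1.2) (h.pos_right _ p.2.2)⟩) <| by
    constructor
    · rintro ⟨a, b⟩ ⟨a', b'⟩ hab
      have := h.eq_and_eq_of_mul_eq_mul a.2 a'.2 b.2 b'.2 (congrArg Subtype.val hab)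
      exact Prod.ext (Subtype.ext this.1) (Subtype.ext this.2)
    · rintro ⟨n, hn⟩
      obtain ⟨a, ha, b, hb, hmul⟩ := h.exists_mul_eq hn
      exact ⟨⟨⟨a, ha⟩, ⟨b, hb⟩⟩, Subtype.ext hmul⟩

theorem hasSum_prod {M : Type*} [AddCommMonoid M] [TopologicalSpace M] {g : ℕ → M} (hg0 : g 0 = 0)
    {s : M} (hs : HasSum g s) : HasSum (fun p : A × B => g (p.1 * p.2)) s :=
  h.mulEquiv.hasSum_iff.2 <| (hasSum_subtype_iff_of_support_subset fun _ hn =>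
    Nat.pos_of_ne_zero fun h0 => hn (h0 ▸ hg0)).2 hs

theorem tsum_mul_tsum {F : Type*} [NormedRing F] [CompleteSpace F] {g : ℕ → F}
    (hg0 : g 0 = 0) (hmul : ∀ m n, g (m * n) = g m * g n) (hs : Summable fun n => ‖g n‖) :
    (∑' a : A, g a) * ∑' b : B, g b = ∑' n, g n := by
  have hA : Summable fun a : A => ‖g a‖ := hs.subtype A
  have hB : Summable fun b : B => ‖g b‖ := hs.subtype B
  rw [tsum_mul_tsum_of_summable_norm hA hB, ← (h.hasSum_prod hg0 hs.of_norm.hasSum).tsum_eq]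
  simp only [hmul]

section EulerProduct

variable {F : Type*} [NormedField F] [CompleteSpace F] {f : ℕ →* F}

theorem tsum_smoothNumbers_mul_tsum_smoothNumbers (hf : ∀ {p : ℕ}, p.Prime → ‖f p‖ < 1) (M : ℕ) :
    (∑' a : A, M.smoothNumbers.indicator f a) * ∑' b : B, M.smoothNumbers.indicator f b =
      ∏ p ∈ M.primesBelow, (1 - f p)⁻¹ := by
  rw [h.tsum_mul_tsum (Set.indicator_of_notMem (fun h0 => h0.1 rfl) _)
    (indicator_smoothNumbers_mul f M) (summable_norm_indicator_smoothNumbers hf M), ← tsum_subtype]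
  exact (EulerProduct.summable_and_hasSum_smoothNumbers_prod_primesBelow_geometric hf M).2.tsum_eq

theorem tsum_smoothNumbers_ne_zero (hf : ∀ {p : ℕ}, p.Prime → ‖f p‖ < 1) (M : ℕ) :
    ∑' a : A, M.smoothNumbers.indicator f a ≠ 0 := by
  refine left_ne_zero_of_mul (b := ∑' b : B, M.smoothNumbers.indicator f b) ?_
  rw [h.tsum_smoothNumbers_mul_tsum_smoothNumbers hf]
  refine Finset.prod_ne_zero_iff.2 fun p hp => inv_ne_zero (sub_ne_zero.2 fun h1 => ?_)
  simpa [← h1] using hf (Nat.prime_of_mem_primesBelow hp)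

end EulerProduct

/-- The complementary factor `B` can only gain from a larger weight. -/
theorem tsum_smoothNumbers_mul_prod_le {g₁ g₂ : ℕ →* ℝ} (hg₁ : ∀ n, 0 ≤ g₁ n)
    (hle : ∀ n, g₁ n ≤ g₂ n) (hg₂ : ∀ {p : ℕ}, p.Prime → g₂ p < 1) (M : ℕ) :
    (∑' a : A, M.smoothNumbers.indicator g₂ a) * ∏ p ∈ M.primesBelow, (1 - g₁ p)⁻¹ ≤
      (∑' a : A, M.smoothNumbers.indicator g₁ a) * ∏ p ∈ M.primesBelow, (1 - g₂ p)⁻¹ := by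
  have hlt₂ : ∀ {p : ℕ}, p.Prime → ‖g₂ p‖ < 1 := fun {p} hp => by
    rw [Real.norm_of_nonneg ((hg₁ p).trans (hle p))]; exact hg₂ hp
  have hlt₁ : ∀ {p : ℕ}, p.Prime → ‖g₁ p‖ < 1 := fun {p} hp => by
    rw [Real.norm_of_nonneg (hg₁ p)]; exact (hle p).trans_lt (hg₂ hp)
  have hnonneg : ∀ {g : ℕ →* ℝ}, (∀ n, 0 ≤ g n) → 0 ≤ ∑' a : A, M.smoothNumbers.indicator g a :=
    fun hg => tsum_nonneg fun _ => Set.indicator_nonneg (fun n _ => hg n) _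
  have hB : ∑' b : B, M.smoothNumbers.indicator g₁ b ≤ ∑' b : B, M.smoothNumbers.indicator g₂ b :=
    ((summable_norm_indicator_smoothNumbers hlt₁ M).of_norm.subtype B).tsum_le_tsum
      (fun b => Set.indicator_le_indicator (hle b))
      ((summable_norm_indicator_smoothNumbers hlt₂ M).of_norm.subtype B)
  rw [← h.tsum_smoothNumbers_mul_tsum_smoothNumbers hlt₁,
    ← h.tsum_smoothNumbers_mul_tsum_smoothNumbers hlt₂, mul_left_comm]
  have := hnonneg hg₁
  have := hnonneg fun n => (hg₁ n).trans (hle n)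
  gcongr

theorem tsum_smoothNumbers_mul_prod_le_of_eq_at_large_primes {g₁ g₂ : ℕ →* ℝ}
    (hg₁ : ∀ n, 0 ≤ g₁ n) (hle : ∀ n, g₁ n ≤ g₂ n) (hg₂ : ∀ {p : ℕ}, p.Prime → g₂ p < 1) {N M : ℕ}
    (hNM : N ≤ M) (heq : ∀ p : ℕ, p.Prime → N ≤ p → g₁ p = g₂ p) :
    (∑' a : A, M.smoothNumbers.indicator g₂ a) * ∏ p ∈ N.primesBelow, (1 - g₁ p)⁻¹ ≤
      (∑' a : A, M.smoothNumbers.indicator g₁ a) * ∏ p ∈ N.primesBelow, (1 - g₂ p)⁻¹ := by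
  have hsub : N.primesBelow ⊆ M.primesBelow :=
    Finset.filter_subset_filter _ (Finset.range_mono hNM)
  have hlarge : ∏ p ∈ M.primesBelow \ N.primesBelow, (1 - g₁ p)⁻¹ =
      ∏ p ∈ M.primesBelow \ N.primesBelow, (1 - g₂ p)⁻¹ :=
    Finset.prod_congr rfl fun p hp => by
      simp only [Finset.mem_sdiff, Nat.mem_primesBelow, not_and'] at hp
      rw [heq p hp.1.2 (not_lt.1 (hp.2 hp.1.2))]
  have hpos : 0 < ∏ p ∈ M.primesBelow \ N.primesBelow, (1 - g₂ p)⁻¹ :=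
    Finset.prod_pos fun p hp => inv_pos.2 <| sub_pos.2 <|
      hg₂ (Nat.prime_of_mem_primesBelow (Finset.mem_sdiff.1 hp).1)
  have := h.tsum_smoothNumbers_mul_prod_le hg₁ hle hg₂ M
  rw [← Finset.prod_sdiff hsub, ← Finset.prod_sdiff hsub, hlarge, mul_left_comm,
    mul_left_comm (∑' a : A, M.smoothNumbers.indicator g₁ a)] at this
  exact le_of_mul_le_mul_left this hpos

theorem summable_of_eq_at_large_primes {g₁ g₂ : ℕ →* ℝ} (hg₁ : ∀ n, 0 ≤ g₁ n)
    (hle : ∀ n, g₁ n ≤ g₂ n) (hg₂ : ∀ {p : ℕ}, p.Prime → g₂ p < 1) {N : ℕ}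
    (heq : ∀ p : ℕ, p.Prime → N ≤ p → g₁ p = g₂ p) (hs : Summable fun a : A => g₁ a) :
    Summable fun a : A => g₂ a := by
  have hpos : ∀ {g : ℕ →* ℝ}, (∀ {p : ℕ}, p.Prime → g p < 1) →
      0 < ∏ p ∈ N.primesBelow, (1 - g p)⁻¹ := fun hg =>
    Finset.prod_pos fun p hp => inv_pos.2 (sub_pos.2 (hg (Nat.prime_of_mem_primesBelow hp)))
  have hg₁' : ∀ {p : ℕ}, p.Prime → g₁ p < 1 := fun {p} hp => (hle p).trans_lt (hg₂ hp)
  have hlt₂ : ∀ {p : ℕ}, p.Prime → ‖g₂ p‖ < 1 := fun {p} hp => by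
    rw [Real.norm_of_nonneg ((hg₁ p).trans (hle p))]; exact hg₂ hp
  have hind : ∀ {M n : ℕ}, M.smoothNumbers.indicator g₁ n ≤ g₁ n := fun {M n} =>
    Set.indicator_le_self' (fun m _ => hg₁ m) n
  refine summable_of_sum_le (fun a => (hg₁ a).trans (hle a)) (c := (∑' a : A, g₁ a) *
    (∏ p ∈ N.primesBelow, (1 - g₂ p)⁻¹) / ∏ p ∈ N.primesBelow, (1 - g₁ p)⁻¹) fun u => ?_
  rw [le_div_iff₀ (hpos hg₁')]
  obtain ⟨M, hNM, huM⟩ : ∃ M, N ≤ M ∧ ∀ a ∈ u, (a : ℕ) < M :=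
    ⟨max N (u.sup (↑) + 1), le_max_left _ _, fun a ha =>
      (Nat.lt_succ_of_le (Finset.le_sup (f := ((↑) : A → ℕ)) ha)).trans_le (le_max_right _ _)⟩
  have hsum : ∑ a ∈ u, g₂ a ≤ ∑' a : A, M.smoothNumbers.indicator g₂ a := by
    rw [← Finset.sum_congr rfl fun a ha => Set.indicator_of_mem
      (Nat.mem_smoothNumbers_of_lt (h.pos_left _ a.2) (huM a ha)) g₂]
    exact ((summable_norm_indicator_smoothNumbers hlt₂ M).of_norm.subtype A).sum_le_tsum u
      fun _ _ => Set.indicator_nonneg (fun n _ => (hg₁ n).trans (hle n)) _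
  calc (∑ a ∈ u, g₂ a) * ∏ p ∈ N.primesBelow, (1 - g₁ p)⁻¹
      ≤ (∑' a : A, M.smoothNumbers.indicator g₂ a) * ∏ p ∈ N.primesBelow, (1 - g₁ p)⁻¹ :=
        mul_le_mul_of_nonneg_right hsum (hpos hg₁').le
    _ ≤ (∑' a : A, M.smoothNumbers.indicator g₁ a) * ∏ p ∈ N.primesBelow, (1 - g₂ p)⁻¹ :=
        h.tsum_smoothNumbers_mul_prod_le_of_eq_at_large_primes hg₁ hle hg₂ hNM heq
    _ ≤ (∑' a : A, g₁ a) * ∏ p ∈ N.primesBelow, (1 - g₂ p)⁻¹ :=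
        mul_le_mul_of_nonneg_right ((hs.of_nonneg_of_le
          (fun _ => Set.indicator_nonneg (fun n _ => hg₁ n) _) fun _ => hind).tsum_le_tsum
            (fun _ => hind) hs) (hpos hg₂).le

end IsDirectFactorPair

section SmallPrimeTwist

variable {K : Type*} [CommMonoidWithZero K]

/-- The completely multiplicative function `n ↦ z ^ k * f n`, where `k` is the number of prime
factors of `n` below `N`, counted with multiplicity. It deforms `f` (at `z = 1`) into a function
supported on integers without prime factors below `N` (at `z = 0`). -/
def smallPrimeTwist (N : ℕ) (z : K) (f : ℕ →*₀ K) : ℕ →*₀ K where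
  toFun n := z ^ n.primeFactorsList.countP (· < N) * f n
  map_zero' := by simp
  map_one' := by simp
  map_mul' m n := by
    rcases eq_or_ne m 0 with rfl | hm
    · simp
    rcases eq_or_ne n 0 with rfl | hn
    · simp
    rw [(Nat.perm_primeFactorsList_mul hm hn).countP_eq, List.countP_append, pow_add, map_mul,
      mul_mul_mul_comm]

theorem smallPrimeTwist_apply (N : ℕ) (z : K) (f : ℕ →*₀ K) (n : ℕ) :
    smallPrimeTwist N z f n = z ^ n.primeFactorsList.countP (· < N) * f n :=
  rfl

theorem smallPrimeTwist_one (N : ℕ) (f : ℕ →*₀ K) : smallPrimeTwist N 1 f = f := by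
  ext n
  rw [smallPrimeTwist_apply, one_pow, one_mul]

theorem smallPrimeTwist_apply_prime (N : ℕ) (z : K) (f : ℕ →*₀ K) {p : ℕ} (hp : p.Prime) :
    smallPrimeTwist N z f p = if p < N then z * f p else f p := by
  rw [smallPrimeTwist_apply, Nat.primeFactorsList_prime hp, List.countP_singleton]
  split_ifs <;> simp_all

theorem smallPrimeTwist_zero_apply {N n : ℕ} (hn : n ≠ 1) (hN : n.minFac < N) (f : ℕ →*₀ K) :
    smallPrimeTwist N 0 f n = 0 := by
  rcases eq_or_ne n 0 with rfl | h0
  · exact map_zero _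
  have hcount : n.primeFactorsList.countP (· < N) ≠ 0 := (List.countP_pos_iff.2 ⟨n.minFac,
    (Nat.mem_primeFactorsList h0).2 ⟨Nat.minFac_prime hn, n.minFac_dvd⟩, by simpa using hN⟩).ne'
  rw [smallPrimeTwist_apply, zero_pow hcount, zero_mul]

theorem norm_smallPrimeTwist_le {F : Type*} [NormedField F] {f : ℕ →*₀ F} {g : ℕ →*₀ ℝ}
    (hfg : ∀ n, ‖f n‖ ≤ g n) (N : ℕ) {z : F} {r : ℝ} (hz : ‖z‖ ≤ r) (n : ℕ) :
    ‖smallPrimeTwist N z f n‖ ≤ smallPrimeTwist N r g n := by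
  rw [smallPrimeTwist_apply, smallPrimeTwist_apply, norm_mul, norm_pow]
  have := hfg n
  have := (norm_nonneg z).trans hz
  gcongr

end SmallPrimeTwist

/-- The completely multiplicative function `n ↦ 1 / n`. -/
noncomputable def natInvHom : ℕ →*₀ ℝ :=
  invMonoidWithZeroHom.comp (Nat.castRingHom ℝ).toMonoidWithZeroHom

theorem natInvHom_apply (n : ℕ) : natInvHom n = (n : ℝ)⁻¹ :=
  rfl

theorem smallPrimeTwist_natInvHom_prime_lt_one (N : ℕ) {p : ℕ} (hp : p.Prime) :
    smallPrimeTwist N (3 / 2) natInvHom p < 1 := by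
  have h2 : (p : ℝ)⁻¹ ≤ 2⁻¹ := inv_anti₀ two_pos (mod_cast hp.two_le)
  rw [smallPrimeTwist_apply_prime N _ _ hp, natInvHom_apply]
  split_ifs <;> linarith

section Hurwitz

open Metric

theorem le_norm_center_of_le_norm_sphere {g : ℂ → ℂ} {z₀ : ℂ} {r δ : ℝ} (hr : 0 < r)
    (hδ : 0 < δ) (hg : DiffContOnCl ℂ g (ball z₀ r)) (hne : ∀ z ∈ closedBall z₀ r, g z ≠ 0)
    (hle : ∀ z ∈ sphere z₀ r, δ ≤ ‖g z‖) : δ ≤ ‖g z₀‖ := by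
  have hinv : ‖(g z₀)⁻¹‖ ≤ δ⁻¹ :=
    Complex.norm_le_of_forall_mem_frontier_norm_le isBounded_ball
      (hg.inv (by rwa [closure_ball z₀ hr.ne']))
      (fun z hz => by
        rw [Pi.inv_apply, norm_inv]
        exact inv_anti₀ hδ (hle z (frontier_ball_subset_sphere hz)))
      (subset_closure (mem_ball_self hr))
  rw [norm_inv] at hinv
  exact (inv_le_inv₀ (norm_pos_iff.2 (hne z₀ (mem_closedBall_self hr.le))) hδ).1 hinv

/-- A form of Hurwitz's theorem on zeros of limits. -/
theorem eqOn_zero_of_tendstoLocallyUniformlyOn {ι : Type*} {l : Filter ι} [l.NeBot] {U : Set ℂ}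
    (hU : IsOpen U) (hUc : IsPreconnected U) {F : ι → ℂ → ℂ} {f : ℂ → ℂ}
    (hF : ∀ i, DifferentiableOn ℂ (F i) U) (hne : ∀ i, ∀ z ∈ U, F i z ≠ 0)
    (hlim : TendstoLocallyUniformlyOn F f l U) {z₀ : ℂ} (hz₀ : z₀ ∈ U) (h0 : f z₀ = 0) :
    Set.EqOn f 0 U := by
  have hf : DifferentiableOn ℂ f U := hlim.differentiableOn (.of_forall hF) hU
  by_contra hcon
  have hiso : ∀ᶠ z in 𝓝 z₀, z ≠ z₀ → f z ≠ 0 := eventually_nhdsWithin_iff.1 <|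
    not_frequently.1 fun hfr => hcon <|
      (hf.analyticOnNhd hU).eqOn_zero_of_preconnected_of_frequently_eq_zero hUc hz₀ hfr
  obtain ⟨ε, hε, hball⟩ := eventually_nhds_iff_ball.1 (hiso.and (hU.mem_nhds hz₀))
  obtain ⟨r, hr, hrε⟩ := exists_between hε
  have hcl : closedBall z₀ r ⊆ U := fun z hz => (hball z (closedBall_subset_ball hrε hz)).2
  have hsph : sphere z₀ r ⊆ U := sphere_subset_closedBall.trans hcl
  obtain ⟨x, hx, hmin⟩ := (isCompact_sphere z₀ r).exists_isMinOn
    (NormedSpace.sphere_nonempty.2 hr.le) (hf.continuousOn.mono hsph).norm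
  have hδ : 0 < ‖f x‖ / 2 := half_pos <| norm_pos_iff.2 <|
    (hball x (closedBall_subset_ball hrε (sphere_subset_closedBall hx))).1
      (ne_of_mem_sphere hx hr.ne')
  obtain ⟨i, hi⟩ := (tendstoUniformlyOn_iff.1 ((tendstoLocallyUniformlyOn_iff_forall_isCompact hU).1
    hlim _ hcl (isCompact_closedBall z₀ r)) _ hδ).exists
  have hlow : ∀ z ∈ sphere z₀ r, ‖f x‖ / 2 ≤ ‖F i z‖ := fun z hz => by
    have hdist := hi z (sphere_subset_closedBall hz)
    have hfx : ‖f x‖ ≤ ‖f z‖ := hmin hz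
    rw [dist_eq_norm] at hdist
    linarith [norm_sub_norm_le (f z) (F i z)]
  have hz₀low := le_norm_center_of_le_norm_sphere hr hδ
    (((hF i).mono hcl).diffContOnCl_ball subset_rfl) (fun z hz => hne i z (hcl hz)) hlow
  have hz₀up := hi z₀ (mem_closedBall_self hr.le)
  rw [h0, dist_zero_left] at hz₀up
  exact hz₀low.not_gt hz₀up

end Hurwitz

theorem tendstoUniformlyOn_tsum_indicator {α β ι E : Type*} [NormedAddCommGroup E] [CompleteSpace E]
    {l : Filter ι} {u : α → ℝ} (hu : Summable u) {f : α → β → E} {s : Set β}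
    (hf : ∀ a, ∀ x ∈ s, ‖f a x‖ ≤ u a) {S : ι → Set α} (hS : ∀ a, ∀ᶠ i in l, a ∈ S i) :
    TendstoUniformlyOn (fun i x => ∑' a, (S i).indicator (f · x) a) (fun x => ∑' a, f a x) l s := by
  have htail : Tendsto (fun i => ∑' a, (S i)ᶜ.indicator u a) l (𝓝 0) := by
    rw [← tsum_zero (β := α)]
    refine tendsto_tsum_of_dominated_convergence hu.norm (fun a => tendsto_const_nhds.congr' ?_)
      (.of_forall fun i a => norm_indicator_le_norm_self u a)
    filter_upwards [hS a] with i hi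
    exact (Set.indicator_of_notMem (Set.notMem_compl_iff.2 hi) u).symm
  refine Metric.tendstoUniformlyOn_iff.2 fun ε hε => ?_
  filter_upwards [htail.eventually_lt_const hε] with i hi x hx
  have hfx : Summable (f · x) := .of_norm_bounded hu (hf · x hx)
  have hsplit : (∑' a, f a x) - ∑' a, (S i).indicator (f · x) a =
      ∑' a, (S i)ᶜ.indicator (f · x) a := by
    rw [sub_eq_iff_eq_add', ← tsum_subtype, ← tsum_subtype,
      (hfx.subtype (S i)).tsum_add_tsum_compl (hfx.subtype (S i)ᶜ)]
  rw [dist_eq_norm, hsplit]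
  refine (tsum_of_norm_bounded (hu.indicator _).hasSum fun a => ?_).trans_lt hi
  rw [norm_indicator_eq_indicator_norm]
  exact Set.indicator_le_indicator (hf a x hx)

namespace IsDirectFactorPair

variable {A B : Set ℕ} (h : IsDirectFactorPair A B)
include h

theorem summable_smallPrimeTwist_natInvHom (hA : Summable fun a : A => ((a : ℕ) : ℝ)⁻¹) (N : ℕ) :
    Summable fun a : A => smallPrimeTwist N (3 / 2) natInvHom a := by
  refine h.summable_of_eq_at_large_primes (g₁ := (natInvHom : ℕ →* ℝ))
    (g₂ := (smallPrimeTwist N (3 / 2) natInvHom : ℕ →* ℝ))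
    (N := N) (fun n => inv_nonneg.2 n.cast_nonneg)
    (fun n => le_mul_of_one_le_left (inv_nonneg.2 n.cast_nonneg) (one_le_pow₀ (by norm_num)))
    (fun hp => smallPrimeTwist_natInvHom_prime_lt_one N hp) (fun p hp hNp => ?_) hA
  exact ((smallPrimeTwist_apply_prime N (3 / 2) natInvHom hp).trans (if_neg hNp.not_gt)).symm

theorem tsum_smallPrimeTwist_eqOn_zero (hA : Summable fun a : A => ((a : ℕ) : ℝ)⁻¹)
    {f : ℕ →*₀ ℂ} (hf : ∀ n, ‖f n‖ ≤ natInvHom n) (N : ℕ) {z₀ : ℂ} (hz₀ : ‖z₀‖ < 3 / 2)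
    (h0 : ∑' a : A, smallPrimeTwist N z₀ f a = 0) :
    Set.EqOn (fun z => ∑' a : A, smallPrimeTwist N z f a) 0 (Metric.ball 0 (3 / 2)) := by
  have hu := h.summable_smallPrimeTwist_natInvHom hA N
  have hbound : ∀ n : ℕ, ∀ z ∈ Metric.ball (0 : ℂ) (3 / 2),
      ‖smallPrimeTwist N z f n‖ ≤ smallPrimeTwist N (3 / 2) natInvHom n := fun n z hz =>
    norm_smallPrimeTwist_le hf N (mem_ball_zero_iff.1 hz).le n
  have hdiff : ∀ n : ℕ, Differentiable ℂ fun z => smallPrimeTwist N z f n := fun n => by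
    simp only [smallPrimeTwist_apply]
    fun_prop
  refine eqOn_zero_of_tendstoLocallyUniformlyOn (l := atTop) Metric.isOpen_ball
    (convex_ball (0 : ℂ) _).isPreconnected
    (F := fun M z => ∑' a : A, (M : ℕ).smoothNumbers.indicator (smallPrimeTwist N z f) a)
    (fun M => ?_) (fun M z hz => ?_) (TendstoUniformlyOn.tendstoLocallyUniformlyOn ?_)
    (mem_ball_zero_iff.2 hz₀) h0
  · refine Complex.differentiableOn_tsum_of_summable_norm hu (fun a => ?_) Metric.isOpen_ball
      fun a z hz => (norm_indicator_le_norm_self _ _).trans (hbound a z hz)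
    by_cases ha : (a : ℕ) ∈ M.smoothNumbers
    · simpa only [Set.indicator_of_mem ha] using (hdiff a).differentiableOn
    · simpa only [Set.indicator_of_notMem ha] using differentiableOn_const 0
  · exact h.tsum_smoothNumbers_ne_zero (f := (smallPrimeTwist N z f : ℕ →* ℂ)) (fun {p} hp =>
      (hbound p z hz).trans_lt (smallPrimeTwist_natInvHom_prime_lt_one N hp)) M
  · exact tendstoUniformlyOn_tsum_indicator hu (f := fun (a : A) z => smallPrimeTwist N z f a)
      (S := fun M : ℕ => {a : A | (a : ℕ) ∈ M.smoothNumbers}) (fun a => hbound a) fun a =>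
      (eventually_gt_atTop (a : ℕ)).mono fun M hM =>
        Nat.mem_smoothNumbers_of_lt (h.pos_left _ a.2) hM

theorem tendsto_tsum_smallPrimeTwist_zero (hA : Summable fun a : A => ((a : ℕ) : ℝ)⁻¹)
    {f : ℕ →*₀ ℂ} (hf : ∀ n, ‖f n‖ ≤ natInvHom n) :
    Tendsto (fun N => ∑' a : A, smallPrimeTwist N 0 f a) atTop (𝓝 1) := by
  rw [← tsum_ite_eq (⟨1, h.one_mem_left⟩ : A) (fun _ => (1 : ℂ))]
  refine tendsto_tsum_of_dominated_convergence hA (fun a => tendsto_const_nhds.congr' ?_)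
    (.of_forall fun N a => ?_)
  · filter_upwards [eventually_gt_atTop (a : ℕ).minFac] with N hN
    split_ifs with ha
    · rw [ha, map_one]
    · exact (smallPrimeTwist_zero_apply (fun h1 => ha (Subtype.ext h1)) hN f).symm
  · rw [← natInvHom_apply, ← smallPrimeTwist_one N natInvHom]
    exact norm_smallPrimeTwist_le hf N (by simp) a

theorem tsum_ne_zero (hA : Summable fun a : A => ((a : ℕ) : ℝ)⁻¹) {f : ℕ →*₀ ℂ}
    (hf : ∀ n, ‖f n‖ ≤ natInvHom n) : ∑' a : A, f a ≠ 0 := by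
  intro h0
  obtain ⟨N, hN⟩ := ((h.tendsto_tsum_smallPrimeTwist_zero hA hf).eventually_ne one_ne_zero).exists
  exact hN <| h.tsum_smallPrimeTwist_eqOn_zero hA hf N (z₀ := 1) (by norm_num)
    (by rwa [smallPrimeTwist_one]) (Metric.mem_ball_self (by norm_num))

theorem isUnit_tsum {R : Type*} [NormedCommRing R] [NormedAlgebra ℂ R] [CompleteSpace R]
    [NormOneClass R] (hA : Summable fun a : A => ((a : ℕ) : ℝ)⁻¹) {T : ℕ →*₀ R}
    (hT : ∀ n, ‖T n‖ ≤ natInvHom n) : IsUnit (∑' a : A, T a) := by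
  by_contra hunit
  obtain ⟨φ, hφ⟩ := WeakDual.CharacterSpace.exists_apply_eq_zero hunit
  have hsum : Summable fun a : A => T a := .of_norm_bounded hA fun a => hT a
  rw [hsum.map_tsum φ (map_continuous φ)] at hφ
  let ψ : R →ₐ[ℂ] ℂ := WeakDual.CharacterSpace.toAlgHom φ
  exact h.tsum_ne_zero hA (f := ψ.toRingHom.toMonoidWithZeroHom.comp T)
    (fun n => (AlgHom.norm_apply_le_self ψ (T n)).trans (hT n)) hφ

theorem exists_mul_tsum_eq_one {R : Type*} [NormedRing R] [NormedAlgebra ℂ R] [CompleteSpace R]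
    [NormOneClass R] (hA : Summable fun a : A => ((a : ℕ) : ℝ)⁻¹) {T : ℕ →*₀ R}
    (hT : ∀ n, ‖T n‖ ≤ natInvHom n) :
    ∃ G ∈ (Algebra.adjoin ℂ (Set.range T)).topologicalClosure, G * ∑' a : A, T a = 1 := by
  have hrange : IsMulCommutative (Algebra.adjoin ℂ (Set.range T)) :=
    Algebra.isMulCommutative_adjoin ℂ <| by
      rintro _ ⟨m, rfl⟩ _ ⟨n, rfl⟩
      rw [← map_mul, ← map_mul, mul_comm]
  set C := (Algebra.adjoin ℂ (Set.range T)).topologicalClosure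
  have hclosed : IsClosed (C : Set R) := Subalgebra.isClosed_topologicalClosure _
  have : CompleteSpace C := hclosed.completeSpace_coe
  have : NormOneClass C := ⟨norm_one (α := R)⟩
  let : NormedCommRing C :=
    { (inferInstance : NormedRing C) with
      mul_comm := (Subalgebra.commRingTopologicalClosure _ mul_comm').mul_comm }
  have hmem : ∀ n, T n ∈ C := fun n =>
    Subalgebra.le_topologicalClosure _ (Algebra.subset_adjoin ⟨n, rfl⟩)
  let T' : ℕ →*₀ C :=
    { toFun := fun n => ⟨T n, hmem n⟩
      map_zero' := Subtype.ext (map_zero T)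
      map_one' := Subtype.ext (map_one T)
      map_mul' := fun m n => Subtype.ext (map_mul T m n) }
  have hsum : Summable fun a : A => T' a := .of_norm_bounded hA fun a => hT a
  obtain ⟨u, hu⟩ := h.isUnit_tsum hA (T := T') hT
  refine ⟨(↑u⁻¹ : C), (↑u⁻¹ : C).2, ?_⟩
  have hcoe : ∑' a : A, T a = ((∑' a : A, T' a : C) : R) :=
    (hsum.hasSum.map C.val continuous_subtype_val).tsum_eq
  rw [hcoe, ← hu]
  exact congrArg Subtype.val u.inv_mul

end IsDirectFactorPair

theorem mem_of_mem_topologicalClosure_adjoin {E : Type*} [NormedAddCommGroup E] [NormedSpace ℂ E]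
    {s : Set (E →L[ℂ] E)} {V : Submodule ℂ E} (hV : IsClosed (V : Set E))
    (hs : ∀ S ∈ s, ∀ v ∈ V, S v ∈ V) {S : E →L[ℂ] E}
    (hS : S ∈ (Algebra.adjoin ℂ s).topologicalClosure) {v : E} (hv : v ∈ V) : S v ∈ V := by
  have hadjoin : ∀ S ∈ Algebra.adjoin ℂ s, ∀ v ∈ V, S v ∈ V := fun S hS => by
    induction hS using Algebra.adjoin_induction with
    | mem S hS => exact hs S hS
    | algebraMap c => exact fun v hv => V.smul_mem c hv
    | add S T _ _ hS hT => exact fun v hv => V.add_mem (hS v hv) (hT v hv)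
    | mul _ T _ _ hS hT => exact fun v hv => hS _ (hT v hv)
  exact hV.closure_subset <| map_mem_closure (f := fun S : E →L[ℂ] E => S v)
    (ContinuousLinearMap.apply ℂ E v).continuous hS fun S hS => hadjoin S hS v hv

section Dilation

open scoped ENNReal lp

/-- The dilation `F ↦ (x ↦ F (x / n) / n)` on bounded functions of a real variable. -/
noncomputable def dilation (n : ℕ) : ℓ^∞(ℝ, ℂ) →L[ℂ] ℓ^∞(ℝ, ℂ) :=
  LinearMap.mkContinuous
    { toFun := fun F => ⟨fun x => (n : ℂ)⁻¹ * F (x / n), memℓp_infty ⟨(n : ℝ)⁻¹ * ‖F‖, by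
        rintro _ ⟨x, rfl⟩
        simpa using mul_le_mul_of_nonneg_left (lp.norm_apply_le_norm ENNReal.top_ne_zero F (x / n))
          (inv_nonneg.2 n.cast_nonneg)⟩⟩
      map_add' := fun F G => lp.ext (funext fun x => mul_add _ _ _)
      map_smul' := fun c F => lp.ext (funext fun x => mul_left_comm _ _ _) }
    (n : ℝ)⁻¹ fun F => lp.norm_le_of_forall_le (by positivity) fun x => by
      simpa using mul_le_mul_of_nonneg_left (lp.norm_apply_le_norm ENNReal.top_ne_zero F (x / n))
        (inv_nonneg.2 n.cast_nonneg)

theorem dilation_apply (n : ℕ) (F : ℓ^∞(ℝ, ℂ)) (x : ℝ) :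
    dilation n F x = (n : ℂ)⁻¹ * F (x / n) :=
  rfl

theorem norm_dilation_le (n : ℕ) : ‖dilation n‖ ≤ natInvHom n :=
  LinearMap.mkContinuous_norm_le _ (inv_nonneg.2 n.cast_nonneg) _

/-- The dilations as a completely multiplicative function with values in operators. -/
noncomputable def dilationHom : ℕ →*₀ (ℓ^∞(ℝ, ℂ) →L[ℂ] ℓ^∞(ℝ, ℂ)) where
  toFun := dilation
  map_zero' := by
    ext F x
    simp [dilation_apply]
  map_one' := by
    ext F x
    simp [dilation_apply]
  map_mul' m n := by
    ext F x
    simp [dilation_apply, mul_left_comm, mul_assoc, div_div]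

/-- The bounded functions having a limit at `+∞`. -/
def convergentAtTop : Submodule ℂ ℓ^∞(ℝ, ℂ) where
  carrier := {F | ∃ c, Tendsto F atTop (𝓝 c)}
  zero_mem' := ⟨0, tendsto_const_nhds⟩
  add_mem' := fun ⟨c, hc⟩ ⟨d, hd⟩ => ⟨c + d, hc.add hd⟩
  smul_mem' := fun k _ ⟨c, hc⟩ => ⟨k • c, hc.const_smul k⟩

theorem isClosed_convergentAtTop : IsClosed (convergentAtTop : Set ℓ^∞(ℝ, ℂ)) := by
  refine isClosed_of_closure_subset fun F hF => cauchy_map_iff_exists_tendsto.1 ?_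
  refine Metric.cauchy_iff.2 ⟨inferInstance, fun ε hε => ?_⟩
  obtain ⟨G, ⟨c, hc⟩, hFG⟩ := Metric.mem_closure_iff.1 hF (ε / 4) (by positivity)
  have hdist : ∀ x, dist (F x) (G x) < ε / 4 := fun x => by
    rw [dist_eq_norm] at hFG ⊢
    exact (lp.norm_apply_le_norm ENNReal.top_ne_zero (F - G) x).trans_lt hFG
  have hball : ∀ᶠ x in atTop, F x ∈ Metric.ball c (ε / 2) := by
    filter_upwards [Metric.tendsto_nhds.1 hc (ε / 4) (by positivity)] with x hx
    rw [Metric.mem_ball]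
    linarith [dist_triangle (F x) (G x) c, hdist x]
  refine ⟨_, hball, fun y hy z hz => ?_⟩
  rw [Metric.mem_ball] at hy hz
  linarith [dist_triangle_right y z c]

theorem dilation_mem_convergentAtTop (n : ℕ) {F : ℓ^∞(ℝ, ℂ)} (hF : F ∈ convergentAtTop) :
    dilation n F ∈ convergentAtTop := by
  obtain ⟨c, hc⟩ := hF
  rcases n.eq_zero_or_pos with rfl | hn
  · rw [show dilation 0 = 0 from map_zero dilationHom]
    exact convergentAtTop.zero_mem
  · exact ⟨(n : ℂ)⁻¹ * c,
      (hc.comp (tendsto_id.atTop_div_const (Nat.cast_pos.2 hn))).const_mul _⟩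

end Dilation

/-- The proportion of elements of `B` among the positive integers up to `x`. -/
noncomputable def countingRatio (B : Set ℕ) (x : ℝ) : ℝ :=
  (∑ n ∈ Finset.Icc 1 ⌊x⌋₊, B.indicator 1 n) / x

theorem hasSum_indicator_Icc (B : Set ℕ) (M : ℕ) :
    HasSum (fun b : B => (Finset.Icc 1 M : Set ℕ).indicator (1 : ℕ → ℝ) b)
      (∑ n ∈ Finset.Icc 1 M, B.indicator 1 n) := by
  refine (hasSum_subtype_iff_indicator (f := (Finset.Icc 1 M : Set ℕ).indicator 1)).2 ?_
  rw [Set.indicator_indicator, Set.inter_comm, ← Set.indicator_indicator]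
  exact hasSum_subtype_iff_indicator.1 ((Finset.Icc 1 M).hasSum (B.indicator 1))

theorem countingRatio_nonneg (B : Set ℕ) {x : ℝ} (hx : 0 ≤ x) : 0 ≤ countingRatio B x :=
  div_nonneg (Finset.sum_nonneg fun _ _ => Set.indicator_nonneg (fun _ _ => zero_le_one) _) hx

theorem abs_countingRatio_le_one (B : Set ℕ) (x : ℝ) : |countingRatio B x| ≤ 1 := by
  rcases lt_or_ge x 1 with hx | hx
  · simp [countingRatio, Nat.floor_eq_zero.2 hx]
  have hx0 : 0 ≤ x := zero_le_one.trans hx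
  rw [abs_of_nonneg (countingRatio_nonneg B hx0)]
  refine div_le_one_of_le₀ ?_ hx0
  calc ∑ n ∈ Finset.Icc 1 ⌊x⌋₊, B.indicator (1 : ℕ → ℝ) n
      ≤ ∑ _n ∈ Finset.Icc 1 ⌊x⌋₊, (1 : ℝ) :=
        Finset.sum_le_sum fun n _ => Set.indicator_le_self' (fun _ _ => zero_le_one) n
    _ = ⌊x⌋₊ := by simp
    _ ≤ x := Nat.floor_le hx0

theorem tendsto_countingRatio_div {B : Set ℕ} {κ : ℝ} (hκ : Tendsto (countingRatio B) atTop (𝓝 κ))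
    {n : ℕ} (hn : 0 < n) : Tendsto (fun t : ℝ => countingRatio B (t / n)) atTop (𝓝 κ) :=
  hκ.comp (tendsto_id.atTop_div_const (Nat.cast_pos.2 hn))

theorem tendsto_atTop_of_hasSum_mul_of_not_summable {ι α : Type*} {l : Filter α} {w : ι → ℝ}
    (hw : ∀ i, 0 ≤ w i) (hws : ¬ Summable w) {r : ι → α → ℝ} {κ : ℝ} (hκ : 0 < κ)
    (hr : ∀ i, Tendsto (r i) l (𝓝 κ)) (hr0 : ∀ᶠ t in l, ∀ i, 0 ≤ r i t) {S : α → ℝ}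
    (hS : ∀ t, HasSum (fun i => w i * r i t) (S t)) : Tendsto S l atTop := by
  refine tendsto_atTop.2 fun C => ?_
  obtain ⟨u, hu⟩ : ∃ u : Finset ι, C / κ < ∑ i ∈ u, w i := by
    by_contra! hle
    exact hws (summable_of_sum_le hw hle)
  have hlim : Tendsto (fun t => ∑ i ∈ u, w i * r i t) l (𝓝 (∑ i ∈ u, w i * κ)) :=
    tendsto_finsetSum u fun i _ => (hr i).const_mul (w i)
  rw [← Finset.sum_mul] at hlim
  filter_upwards [hlim.eventually_const_lt ((div_lt_iff₀ hκ).1 hu), hr0] with t ht hrt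
  exact ht.le.trans (sum_le_hasSum u (fun i _ => mul_nonneg (hw i) (hrt i)) (hS t))

namespace IsDirectFactorPair

variable {A B : Set ℕ} (h : IsDirectFactorPair A B)
include h

theorem hasSum_mul_countingRatio {f fA : ℕ → ℝ} (hfA : ∀ a ∈ A, ∀ b ∈ B, fA (a * b) = f a)
    (t : ℝ) : HasSum (fun a : A => f a / (a : ℕ) * countingRatio B (t / (a : ℕ)))
      ((∑ n ∈ Finset.Icc 1 ⌊t⌋₊, fA n) / t) := by
  have hfiber : ∀ a : A, HasSum (fun b : B => (Finset.Icc 1 ⌊t⌋₊ : Set ℕ).indicator fA (a * b))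
      (f a * ∑ n ∈ Finset.Icc 1 ⌊t / (a : ℕ)⌋₊, B.indicator 1 n) := fun a => by
    refine ((hasSum_indicator_Icc B ⌊t / (a : ℕ)⌋₊).mul_left (f a)).congr_fun fun b => ?_
    have hmem : (a * b : ℕ) ∈ Finset.Icc 1 ⌊t⌋₊ ↔ (b : ℕ) ∈ Finset.Icc 1 ⌊t / (a : ℕ)⌋₊ := by
      have ha := h.pos_left _ a.2
      have hb := h.pos_right _ b.2
      rw [Finset.mem_Icc, Finset.mem_Icc, Nat.floor_div_natCast, Nat.le_div_iff_mul_le ha,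
        mul_comm (b : ℕ)]
      exact and_congr_left' (iff_of_true (Nat.mul_pos ha hb) hb)
    simp only [Set.indicator_apply, Finset.mem_coe, hmem, hfA a a.2 b b.2, Pi.one_apply, mul_ite,
      mul_one, mul_zero]
  have hmean := hasSum_subtype_iff_indicator.1 ((Finset.Icc 1 ⌊t⌋₊).hasSum fA)
  refine (((h.hasSum_prod (by simp) hmean).prod_fiberwise hfiber).div_const t).congr_fun fun a => ?_
  have ha : ((a : ℕ) : ℝ) ≠ 0 := Nat.cast_ne_zero.2 (h.pos_left _ a.2).ne'
  rw [countingRatio]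
  field_simp

theorem tendsto_mean_of_tendsto_countingRatio {κ : ℝ}
    (hκ : Tendsto (countingRatio B) atTop (𝓝 κ)) {f fA : ℕ → ℝ}
    (hfA : ∀ a ∈ A, ∀ b ∈ B, fA (a * b) = f a) (hf : Summable fun a : A => f a / (a : ℕ)) :
    Tendsto (fun t : ℝ => (∑ n ∈ Finset.Icc 1 ⌊t⌋₊, fA n) / t) atTop
      (𝓝 ((∑' a : A, f a / (a : ℕ)) * κ)) := by
  simp only [← (h.hasSum_mul_countingRatio hfA _).tsum_eq, ← tsum_mul_right]
  refine tendsto_tsum_of_dominated_convergence hf.norm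
    (fun a => (tendsto_countingRatio_div hκ (h.pos_left _ a.2)).const_mul _)
    (.of_forall fun t a => ?_)
  rw [norm_mul]
  exact mul_le_of_le_one_right (norm_nonneg _) (abs_countingRatio_le_one B _)

variable (hA : Summable fun a : A => ((a : ℕ) : ℝ)⁻¹)
include hA

open scoped ENNReal lp in
/-- A Tauberian theorem of Wiener type: the inverse of the sum of dilations preserves convergence at
infinity because it is a limit of polynomials in dilations. -/
theorem mem_convergentAtTop_of_tendsto_tsum {F : ℓ^∞(ℝ, ℂ)} {c : ℂ}
    (hF : Tendsto (fun x : ℝ => ∑' a : A, ((a : ℕ) : ℂ)⁻¹ * F (x / (a : ℕ))) atTop (𝓝 c)) :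
    F ∈ convergentAtTop := by
  have : Nontrivial ℓ^∞(ℝ, ℂ) := ⟨lp.single ∞ 0 1, 0, fun h0 => one_ne_zero <| by
    rw [← lp.single_apply_self (E := fun _ : ℝ => ℂ) ∞ 0 1, h0]; rfl⟩
  obtain ⟨G, hG, hGX⟩ := h.exists_mul_tsum_eq_one hA norm_dilation_le (T := dilationHom)
  set X := ∑' a : A, dilationHom a
  have hX : HasSum (fun a : A => dilationHom a) X :=
    (Summable.of_norm_bounded hA fun a => norm_dilation_le a).hasSum
  have hXapply : ∀ x, X F x = ∑' a : A, ((a : ℕ) : ℂ)⁻¹ * F (x / (a : ℕ)) := fun x =>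
    ((hX.mapL (ContinuousLinearMap.apply ℂ _ F)).mapL
      (lp.evalCLM ℂ (fun _ : ℝ => ℂ) ∞ x)).tsum_eq.symm
  have hXF : X F ∈ convergentAtTop := ⟨c, hF.congr fun x => (hXapply x).symm⟩
  have hGXF : (G * X) F ∈ convergentAtTop :=
    mem_of_mem_topologicalClosure_adjoin isClosed_convergentAtTop
      (by rintro _ ⟨n, rfl⟩ v hv; exact dilation_mem_convergentAtTop n hv) hG hXF
  rwa [hGX] at hGXF

open scoped ENNReal lp in
theorem exists_tendsto_countingRatio : ∃ κ, Tendsto (countingRatio B) atTop (𝓝 κ) := by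
  let F : ℓ^∞(ℝ, ℂ) := ⟨fun x => (countingRatio B x : ℂ), memℓp_infty ⟨1, by
    rintro _ ⟨x, rfl⟩
    simpa using abs_countingRatio_le_one B x⟩⟩
  have htsum : ∀ x : ℝ, ∑' a : A, ((a : ℕ) : ℂ)⁻¹ * F (x / (a : ℕ)) = ((⌊x⌋₊ / x : ℝ) : ℂ) :=
    fun x => by
      have hone := (h.hasSum_mul_countingRatio (f := 1) (fA := 1) (fun _ _ _ _ => rfl) x).tsum_eq
      simp only [Pi.one_apply, one_div, Finset.sum_const, Nat.card_Icc, add_tsub_cancel_right,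
        nsmul_one] at hone
      rw [← hone, Complex.ofReal_tsum]
      simp [F]
  obtain ⟨c, hc⟩ := h.mem_convergentAtTop_of_tendsto_tsum hA (F := F) (c := (1 : ℝ)) <|
    ((Complex.continuous_ofReal.tendsto 1).comp tendsto_nat_floor_div_atTop).congr
      fun x => (htsum x).symm
  exact ⟨c.re, (Complex.continuous_re.tendsto c).comp hc⟩

/-- The Erdős–Saffari–Vaughan theorem. -/
theorem tendsto_countingRatio :
    Tendsto (countingRatio B) atTop (𝓝 (∑' a : A, ((a : ℕ) : ℝ)⁻¹)⁻¹) := by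
  obtain ⟨κ, hκ⟩ := h.exists_tendsto_countingRatio hA
  have hmean := h.tendsto_mean_of_tendsto_countingRatio hκ (f := 1) (fA := 1)
    (fun _ _ _ _ => rfl) (by simpa using hA)
  have hfloor : (∑' a : A, ((a : ℕ) : ℝ)⁻¹) * κ = 1 :=
    tendsto_nhds_unique (by simpa using hmean) tendsto_nat_floor_div_atTop
  rwa [← eq_inv_of_mul_eq_one_right hfloor]

theorem tendsto_mean {f fA : ℕ → ℝ} (hfA : ∀ a ∈ A, ∀ b ∈ B, fA (a * b) = f a)
    (hf : Summable fun a : A => f a / (a : ℕ)) :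
    Tendsto (fun t : ℝ => (∑ n ∈ Finset.Icc 1 ⌊t⌋₊, fA n) / t) atTop
      (𝓝 ((∑' a : A, ((a : ℕ) : ℝ)⁻¹)⁻¹ * ∑' a : A, f a / (a : ℕ))) :=
  mul_comm (∑' a : A, f a / (a : ℕ)) _ ▸
    h.tendsto_mean_of_tendsto_countingRatio (h.tendsto_countingRatio hA) hfA hf

theorem tendsto_mean_atTop_of_nonneg {f fA : ℕ → ℝ} (hfA : ∀ a ∈ A, ∀ b ∈ B, fA (a * b) = f a)
    (hf0 : ∀ n, 0 ≤ f n) (hf : ¬ Summable fun a : A => f a / (a : ℕ)) :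
    Tendsto (fun t : ℝ => (∑ n ∈ Finset.Icc 1 ⌊t⌋₊, fA n) / t) atTop atTop := by
  have hκ : 0 < (∑' a : A, ((a : ℕ) : ℝ)⁻¹)⁻¹ := inv_pos.2 <|
    hA.tsum_pos (fun a => by positivity) ⟨1, h.one_mem_left⟩ (by simp)
  refine tendsto_atTop_of_hasSum_mul_of_not_summable (fun a : A => div_nonneg (hf0 a)
    (Nat.cast_nonneg _)) hf hκ
    (fun a => tendsto_countingRatio_div (h.tendsto_countingRatio hA) (h.pos_left _ a.2)) ?_
    (h.hasSum_mul_countingRatio hfA)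
  filter_upwards [eventually_ge_atTop 0] with t ht a
  exact countingRatio_nonneg B (div_nonneg ht (Nat.cast_nonneg _))

theorem tendsto_mean_atTop {f fA : ℕ → ℝ} (hfA : ∀ a ∈ A, ∀ b ∈ B, fA (a * b) = f a)
    (hmin : Summable fun a : A => min (f a) 0 / (a : ℕ))
    (hf : ¬ Summable fun a : A => f a / (a : ℕ)) :
    Tendsto (fun t : ℝ => (∑ n ∈ Finset.Icc 1 ⌊t⌋₊, fA n) / t) atTop atTop := by
  have hmax : ¬ Summable fun a : A => max (f a) 0 / (a : ℕ) := fun hmax => hf <|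
    (hmax.add hmin).congr fun a => by rw [← add_div, max_add_min, add_zero]
  have hpos := h.tendsto_mean_atTop_of_nonneg hA (f := fun n => max (f n) 0)
    (fA := fun n => max (fA n) 0) (fun a ha b hb => by rw [hfA a ha b hb])
    (fun n => le_max_right _ _) hmax
  have hneg := h.tendsto_mean hA (f := fun n => min (f n) 0) (fA := fun n => min (fA n) 0)
    (fun a ha b hb => by rw [hfA a ha b hb]) hmin
  refine (hpos.atTop_add hneg).congr fun t => ?_
  simp only [← add_div, ← Finset.sum_add_distrib, max_add_min, add_zero]

end IsDirectFactorPair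

open scoped Classical in
/-- Mean value of the `A`-reduction of `f`, for complementary direct factors `A`, `B` of `ℕ+`
(positive integers, represented here by positive naturals): the Cesàro means of `f(·;A)`
converge to `λ ∑_{a ∈ A} f(a)/a`, possibly `+∞`. -/
theorem stmt12 (A B : Set ℕ) (hApos : ∀ a ∈ A, 0 < a) (hBpos : ∀ b ∈ B, 0 < b)
    (hfac : ∀ n : ℕ, 0 < n → ∃! p : ℕ × ℕ, p.1 ∈ A ∧ p.2 ∈ B ∧ p.1 * p.2 = n)
    (lam : ℝ) (hsum : Summable fun a : A => 1 / ((a : ℕ) : ℝ))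
    (hlam : lam = (∑' a : A, 1 / ((a : ℕ) : ℝ))⁻¹) (hlam0 : 0 < lam) (hlam1 : lam ≤ 1)
    (f fA : ℕ → ℝ)
    (hmin : Summable fun a : A => min (f a) 0 / ((a : ℕ) : ℝ))
    (hfA : ∀ a ∈ A, ∀ b ∈ B, fA (a * b) = f a) :
    Filter.Tendsto (fun t : ℝ => (∑ n ∈ Finset.Icc 1 ⌊t⌋₊, fA n) / t) Filter.atTop
      (if Summable (fun a : A => f a / ((a : ℕ) : ℝ)) then
        nhds (lam * ∑' a : A, f a / ((a : ℕ) : ℝ))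
      else Filter.atTop) := by
  have h : IsDirectFactorPair A B := ⟨hApos, hBpos, hfac⟩
  simp only [one_div] at hsum hlam
  split_ifs with hf
  · exact hlam ▸ h.tendsto_mean hsum hfA hf
  · exact h.tendsto_mean_atTop hsum hfA hmin hf
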